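/- Let G be the CPDAG of the Markov equivalence class of a DAG, and let X and Y be distinct nodes that are not adjacent in G. Then X is a definite non-ancestor of Y in G if and only if X and Y are d-separated by Pa_G(X) in every DAG of the Markov equivalence class represented by G. -/

import Mathlib

/-- A directed acyclic graph on node set `V`: a directed edge relation with no
directed cycles (no edge `a → b` together with a directed path from `b` back to `a`). -/
structure Dag (V : Type*) where
  edge : V → V → Prop
  acyclic : ∀ a b : V, edge a b → ¬ Relation.ReflTransGen edge b a

variable {V : Type*}

namespace Dag

/-- `a` is an ancestor of `b` (equivalently, `b` is a descendant of `a`):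
there is a directed path from `a` to `b`; every node is its own ancestor. -/
def Anc (D : Dag V) (a b : V) : Prop := Relation.ReflTransGen D.edge a b

/-- `a` and `b` are adjacent (joined by an edge in either direction). -/
def Adj (D : Dag V) (a b : V) : Prop := D.edge a b ∨ D.edge b a

/-- The parents of `x` in the DAG `D`. -/
def Pa (D : Dag V) (x : V) : Set V := {a | D.edge a x}

/-- The Markov blanket of `x`: parents, children, and parents of children of `x`
(excluding `x` itself). -/
def MB (D : Dag V) (x : V) : Set V :=
  {v | v ≠ x ∧ (D.edge v x ∨ D.edge x v ∨ ∃ c : V, D.edge x c ∧ D.edge v c)}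

end Dag

/-- A path between `x` and `y` with respect to an adjacency relation `A`:
a sequence of distinct nodes, starting at `x` and ending at `y`, in which
consecutive nodes are adjacent. `n` is the number of edges of the path. -/
structure GPath (A : V → V → Prop) (x y : V) where
  n : ℕ
  f : Fin (n + 1) → V
  inj : Function.Injective f
  first : f ⟨0, by omega⟩ = x
  last : f ⟨n, by omega⟩ = y
  adj : ∀ i : Fin n, A (f i.castSucc) (f i.succ)

namespace GPath

/-- The non-endpoint node at position `i` of the path `p` is a collider with respect
to the directed edge relation `E`: both incident edges of the path point into it. -/
def ColliderAt {A : V → V → Prop} {x y : V} (p : GPath A x y)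
    (E : V → V → Prop) (i : ℕ) : Prop :=
  ∃ (_ : 0 < i) (_ : i < p.n),
    E (p.f ⟨i - 1, by omega⟩) (p.f ⟨i, by omega⟩) ∧
    E (p.f ⟨i + 1, by omega⟩) (p.f ⟨i, by omega⟩)

/-- The path `p` is blocked by the node set `S` in the DAG `D`: it contains a
non-collider that lies in `S`, or a collider such that neither the collider nor any
of its descendants lies in `S`. -/
def Blocked {A : V → V → Prop} {x y : V} (p : GPath A x y)
    (D : Dag V) (S : Set V) : Prop :=
  ∃ (i : ℕ) (_ : 0 < i) (_ : i < p.n),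
    (¬ p.ColliderAt D.edge i ∧ p.f ⟨i, by omega⟩ ∈ S) ∨
    (p.ColliderAt D.edge i ∧ ∀ d : V, D.Anc (p.f ⟨i, by omega⟩) d → d ∉ S)

end GPath

namespace Dag

/-- `x` and `y` are d-separated by `S` in the DAG `D`: every path between `x` and `y`
is blocked by `S`. -/
def dSep (D : Dag V) (x y : V) (S : Set V) : Prop :=
  ∀ p : GPath D.Adj x y, p.Blocked D S

/-- Two DAGs on the same node set are Markov equivalent if they have exactly the same
d-separation relations. -/
def MEquiv (D D' : Dag V) : Prop :=
  ∀ (x y : V) (S : Set V), D.dSep x y S ↔ D'.dSep x y S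

/-- The edge between `a` and `b` is directed `a → b` in the CPDAG of the Markov
equivalence class of `D`: the edge `a → b` holds in every DAG Markov equivalent to `D`. -/
def CpDir (D : Dag V) (a b : V) : Prop :=
  ∀ D' : Dag V, D.MEquiv D' → D'.edge a b

/-- The edge between `a` and `b` is undirected (`a − b`) in the CPDAG: `a` and `b` are
adjacent (the CPDAG has the same adjacencies as the DAGs of the MEC) but the edge is not
directed either way in the CPDAG. -/
def CpUndir (D : Dag V) (a b : V) : Prop :=
  D.Adj a b ∧ ¬ D.CpDir a b ∧ ¬ D.CpDir b a

/-- `Pa_G(a)`: the nodes with a directed edge into `a` in the CPDAG. -/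
def CpPa (D : Dag V) (a : V) : Set V := {p | D.CpDir p a}

/-- `Ch_G(a)`: the nodes `b` with the edge directed `a → b` in the CPDAG. -/
def CpCh (D : Dag V) (a : V) : Set V := {c | D.CpDir a c}

/-- `Sib_G(a)`: the nodes joined to `a` by an undirected edge in the CPDAG. -/
def CpSib (D : Dag V) (a : V) : Set V := {s | D.CpUndir a s}

end Dag

namespace GPath

/-- `p` is a possibly directed path in the CPDAG: no edge on it is directed
backwards (as `V_i ← V_{i+1}`) in the CPDAG. -/
def CpPossiblyDirected {D : Dag V} {x y : V} (p : GPath D.Adj x y) : Prop :=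
  ∀ i : Fin p.n, ¬ D.CpDir (p.f i.succ) (p.f i.castSucc)

/-- `p` is a (fully) directed path in the CPDAG: every edge on it is directed
forwards in the CPDAG. -/
def CpDirected {D : Dag V} {x y : V} (p : GPath D.Adj x y) : Prop :=
  ∀ i : Fin p.n, D.CpDir (p.f i.castSucc) (p.f i.succ)

/-- `p` is a directed path from `x` to `y` in the DAG `D` itself. -/
def DirectedIn {D : Dag V} {x y : V} (p : GPath D.Adj x y) : Prop :=
  ∀ i : Fin p.n, D.edge (p.f i.castSucc) (p.f i.succ)

/-- `p` is unshielded: for every three consecutive nodes on it, the first and the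
third are non-adjacent. -/
def Unshielded {D : Dag V} {x y : V} (p : GPath D.Adj x y) : Prop :=
  ∀ (i : ℕ) (_ : i + 2 ≤ p.n), ¬ D.Adj (p.f ⟨i, by omega⟩) (p.f ⟨i + 2, by omega⟩)

end GPath

namespace Dag

/-- `x` is a possible ancestor of `y` in the CPDAG: there is a possibly directed path
from `x` to `y`. -/
def PossAn (D : Dag V) (x y : V) : Prop :=
  ∃ p : GPath D.Adj x y, p.CpPossiblyDirected

/-- `x` is an explicit ancestor of `y` in the CPDAG: there is a fully directed path
from `x` to `y` in the CPDAG. -/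
def ExplAn (D : Dag V) (x y : V) : Prop :=
  ∃ p : GPath D.Adj x y, p.CpDirected

/-- The CPDAG is amenable relative to `(x, y)`: every possibly directed path from
`x` to `y` starts with a directed edge out of `x`. -/
def Amenable (D : Dag V) (x y : V) : Prop :=
  ∀ p : GPath D.Adj x y, p.CpPossiblyDirected →
    ∀ _ : 0 < p.n, D.CpDir (p.f ⟨0, by omega⟩) (p.f ⟨1, by omega⟩)

/-- `S` is a valid adjustment set for `(x, y)` in the DAG `D`:
(i) no element of `S` is a descendant of any node `w ≠ x` lying on a directed path
from `x` to `y`, and (ii) every path between `x` and `y` that is not a directed path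
from `x` to `y` is blocked by `S`. -/
def ValidAdjustment (D : Dag V) (x y : V) (S : Set V) : Prop :=
  (∀ s ∈ S, ∀ w : V, w ≠ x → D.Anc x w → D.Anc w y → ¬ D.Anc w s) ∧
  (∀ p : GPath D.Adj x y, ¬ p.DirectedIn → p.Blocked D S)

/-- `Cn_D(x, y)`: the nodes `w ≠ x` lying on some directed path from `x` to `y` in `D`. -/
def Cn (D : Dag V) (x y : V) : Set V := {w | w ≠ x ∧ D.Anc x w ∧ D.Anc w y}

end Dag

open Relation

namespace Dag

theorem Anc.trans' {D : Dag V} {a b c : V} (h : D.Anc a b) (h' : D.Anc b c) : D.Anc a c :=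
  ReflTransGen.trans h h'

theorem anc_of_edge {D : Dag V} {a b : V} (h : D.edge a b) : D.Anc a b := ReflTransGen.single h

theorem edge_ne {D : Dag V} {a b : V} (h : D.edge a b) : a ≠ b := by
  rintro rfl
  exact D.acyclic _ _ h ReflTransGen.refl

theorem edge_asymm {D : Dag V} {a b : V} (h : D.edge a b) : ¬ D.edge b a :=
  fun h' => D.acyclic _ _ h (anc_of_edge h')

theorem Adj.symm' {D : Dag V} {a b : V} (h : D.Adj a b) : D.Adj b a := Or.symm h

/-- States reachable by an active walk from `x` (`true`: last edge points into the node). -/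
inductive Rch (D : Dag V) (S : Set V) (x : V) : Bool → V → Prop
  | sd {w : V} : D.edge x w → Rch D S x true w
  | su {w : V} : D.edge w x → Rch D S x false w
  | td {v w : V} : Rch D S x false v → v ∉ S → D.edge v w → Rch D S x true w
  | tu {v w : V} : Rch D S x false v → v ∉ S → D.edge w v → Rch D S x false w
  | hd {v w : V} : Rch D S x true v → v ∉ S → D.edge v w → Rch D S x true w
  | hu {v w : V} : Rch D S x true v → (∃ d, D.Anc v d ∧ d ∈ S) → D.edge w v → Rch D S x false w

/-- An open path given by an indexing on the natural numbers. -/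
structure NP (D : Dag V) (S : Set V) (x : V) (n : ℕ) (f : ℕ → V) : Prop where
  zero : f 0 = x
  inj : ∀ i j, i ≤ n → j ≤ n → f i = f j → i = j
  adj : ∀ i, i < n → D.Adj (f i) (f (i+1))
  col : ∀ i, i + 2 ≤ n → D.edge (f i) (f (i+1)) → D.edge (f (i+2)) (f (i+1)) →
    ∃ d, D.Anc (f (i+1)) d ∧ d ∈ S
  ncol : ∀ i, i + 2 ≤ n → ¬ (D.edge (f i) (f (i+1)) ∧ D.edge (f (i+2)) (f (i+1))) →
    f (i+1) ∉ S

theorem not_dSep_iff_np (D : Dag V) (S : Set V) (x y : V) :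
    ¬ D.dSep x y S ↔ ∃ n f, NP D S x n f ∧ f n = y := by
  constructor
  · intro h
    unfold dSep at h
    push Not at h
    obtain ⟨p, hp⟩ := h
    unfold GPath.Blocked GPath.ColliderAt at hp
    obtain ⟨g, key⟩ : ∃ g : ℕ → V, ∀ i (hi : i ≤ p.n), g i = p.f ⟨i, by omega⟩ :=
      ⟨fun i => if h : i ≤ p.n then p.f ⟨i, by omega⟩ else x, by intro i hi; simp [hi]⟩
    refine ⟨p.n, g, ⟨?_, ?_, ?_, ?_, ?_⟩, ?_⟩
    · rw [key 0 (by omega)]; exact p.first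
    · intro i j hi hj hij
      rw [key i hi, key j hj] at hij
      simpa using p.inj hij
    · intro i hi
      rw [key i hi.le, key (i+1) hi]
      exact p.adj ⟨i, hi⟩
    · intro i hi h1 h2
      rw [key i (by omega), key (i+1) (by omega)] at h1
      rw [key (i+2) (by omega), key (i+1) (by omega)] at h2
      rw [key (i+1) (by omega)]
      by_contra hc
      push Not at hc
      exact hp ⟨i+1, by omega, by omega, Or.inr ⟨⟨by omega, by omega, h1, h2⟩, hc⟩⟩
    · intro i hi h
      rw [key i (by omega), key (i+1) (by omega), key (i+2) (by omega)] at h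
      rw [key (i+1) (by omega)]
      intro hc
      refine hp ⟨i+1, by omega, by omega, Or.inl ⟨?_, hc⟩⟩
      rintro ⟨_, _, h1, h2⟩
      exact h ⟨h1, h2⟩
    · rw [key _ le_rfl]; exact p.last
  · rintro ⟨n, f, hf, hy⟩ h
    obtain ⟨i, hi0, hin, hb⟩ := h ⟨n, fun i => f i, fun i j hij => Fin.ext (hf.inj _ _ (by omega) (by omega) hij),
      hf.zero, hy, fun i => hf.adj i i.2⟩
    obtain ⟨i, rfl⟩ : ∃ k, i = k + 1 := ⟨i - 1, by omega⟩
    simp only at hin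
    rcases hb with ⟨h1, h2⟩ | ⟨⟨_, _, h1, h2⟩, h3⟩
    · refine hf.ncol i (by omega) ?_ h2
      rintro ⟨h3, h4⟩
      exact h1 ⟨by omega, hin, h3, h4⟩
    · obtain ⟨d, hd, hd'⟩ := hf.col i (by omega) h1 h2
      exact h3 d hd hd'

theorem NP.rch {D : Dag V} {S : Set V} {x : V} {n : ℕ} {f : ℕ → V} (h : NP D S x n f) :
    ∀ i, i < n → (D.edge (f i) (f (i+1)) → Rch D S x true (f (i+1))) ∧
      (D.edge (f (i+1)) (f i) → Rch D S x false (f (i+1))) := by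
  intro i
  induction i with
  | zero =>
    intro _
    rw [h.zero]
    exact ⟨Rch.sd, Rch.su⟩
  | succ i ih =>
    intro hi
    obtain ⟨ih1, ih2⟩ := ih (by omega)
    have hc := h.col i (by omega)
    have hn := h.ncol i (by omega)
    rcases h.adj i (by omega) with ha | ha
    · refine ⟨fun e => Rch.hd (ih1 ha) (hn fun h' => edge_asymm e h'.2) e, fun e =>
        Rch.hu (ih1 ha) (hc ha e) e⟩
    · have : f (i+1) ∉ S := hn fun h' => edge_asymm ha h'.1
      exact ⟨fun e => Rch.td (ih2 ha) this e, fun e => Rch.tu (ih2 ha) this e⟩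

theorem NP.trunc {D : Dag V} {S : Set V} {x : V} {n : ℕ} {f : ℕ → V} (h : NP D S x n f)
    {j : ℕ} (hj : j ≤ n) : NP D S x j f :=
  ⟨h.zero, fun i k hi hk => h.inj i k (by omega) (by omega), fun i hi => h.adj i (by omega),
   fun i hi => h.col i (by omega), fun i hi => h.ncol i (by omega)⟩

theorem NP.desc {D : Dag V} {S : Set V} {x : V} {f : ℕ → V} {j : ℕ}
    (he : D.edge (f j) (f (j+1))) : ∀ m, NP D S x (j+1+m) f →
    (∃ d, D.Anc (f j) d ∧ d ∈ S) ∨ (D.Anc (f j) (f (j+1+m)) ∧ D.edge (f (j+m)) (f (j+1+m))) := by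
  intro m
  induction m with
  | zero => intro _; exact Or.inr ⟨anc_of_edge he, he⟩
  | succ m ih =>
    intro h
    rcases ih (h.trunc (by omega)) with h1 | ⟨h1, h2⟩
    · exact Or.inl h1
    · have hadj := h.adj (j+1+m) (by omega)
      have e1 : j + 1 + m = j + m + 1 := by omega
      rcases hadj with ha | ha
      · right
        refine ⟨h1.trans' (anc_of_edge ha), ?_⟩
        rw [show j + (m+1) = j+1+m by omega]
        exact ha
      · left
        have := h.col (j+m) (by omega)
        rw [show j+m+2 = j+1+m+1 by omega, ← e1] at this
        obtain ⟨d, hd, hd'⟩ := this h2 ha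
        exact ⟨d, h1.trans' hd, hd'⟩

theorem NP.snoc {D : Dag V} {S : Set V} {x : V} {n : ℕ} {f : ℕ → V} (h : NP D S x (n+1) f)
    {w : V} (hw : ∀ i, i ≤ n+1 → f i ≠ w) (ha : D.Adj (f (n+1)) w)
    (hc : D.edge (f n) (f (n+1)) → D.edge w (f (n+1)) → ∃ d, D.Anc (f (n+1)) d ∧ d ∈ S)
    (hn : ¬ (D.edge (f n) (f (n+1)) ∧ D.edge w (f (n+1))) → f (n+1) ∉ S) :
    NP D S x (n+2) (fun i => if i ≤ n+1 then f i else w) := by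
  refine ⟨by simpa using h.zero, ?_, ?_, ?_, ?_⟩
  · intro i j hi hj hij
    by_cases h1 : i ≤ n+1 <;> by_cases h2 : j ≤ n+1 <;> simp only [h1, h2, if_true, if_false] at hij
    · exact h.inj _ _ h1 h2 hij
    · exact absurd hij (hw i h1)
    · exact absurd hij.symm (hw j h2)
    · omega
  · intro i hi
    by_cases h1 : i + 1 ≤ n + 1
    · simpa only [h1, show i ≤ n+1 by omega, if_true] using h.adj i (by omega)
    · obtain rfl : i = n+1 := by omega
      simpa using ha
  · intro i hi
    by_cases h1 : i + 2 ≤ n + 1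
    · simpa only [h1, show i ≤ n+1 by omega, show i + 1 ≤ n+1 by omega, if_true]
        using h.col i (by omega)
    · obtain rfl : i = n := by omega
      simpa using hc
  · intro i hi
    by_cases h1 : i + 2 ≤ n + 1
    · simpa only [h1, show i ≤ n+1 by omega, show i + 1 ≤ n+1 by omega, if_true]
        using h.ncol i (by omega)
    · obtain rfl : i = n := by omega
      simpa using hn

/-- There is an open path from `x` to `v` at least as capable as arrival type `b`. -/
def Cap (D : Dag V) (S : Set V) (x : V) (b : Bool) (v : V) : Prop :=
  v = x ∨ ∃ n f, NP D S x (n+1) f ∧ f (n+1) = v ∧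
    ((D.edge (f n) v ∧ (b = true ∨ ∃ d, D.Anc v d ∧ d ∈ S)) ∨
     (D.edge v (f n) ∧ (b = false ∨ v ∉ S)))

theorem NP.one {D : Dag V} {S : Set V} {x w : V} (h : D.Adj x w) :
    NP D S x 1 (fun i => if i = 0 then x else w) := by
  have hne : x ≠ w := by
    rcases h with h | h
    · exact edge_ne h
    · exact (edge_ne h).symm
  refine ⟨by simp, ?_, ?_, ?_, ?_⟩
  · intro i j hi hj
    obtain rfl | rfl : i = 0 ∨ i = 1 := by omega
    all_goals obtain rfl | rfl : j = 0 ∨ j = 1 := by omega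
    all_goals simp [hne, hne.symm]
  · intro i hi
    obtain rfl : i = 0 := by omega
    simpa using h
  · intro i hi; omega
  · intro i hi; omega

theorem cap_start {D : Dag V} {S : Set V} {x w : V} {b : Bool}
    (h : (b = true ∧ D.edge x w) ∨ (b = false ∧ D.edge w x)) : Cap D S x b w := by
  right
  refine ⟨0, _, NP.one (S := S) (x := x) (w := w) ?_, by simp, ?_⟩
  · exact h.imp And.right And.right
  · simp only [if_true]
    rcases h with ⟨h1, h2⟩ | ⟨h1, h2⟩
    · exact Or.inl ⟨h2, Or.inl h1⟩
    · exact Or.inr ⟨h2, Or.inl h1⟩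

theorem cap_step {D : Dag V} {S : Set V} {x v w : V} {b : Bool} {n : ℕ} {f : ℕ → V}
    (h : NP D S x (n+1) f) (hv : f (n+1) = v)
    (he : (b = true ∧ D.edge v w) ∨ (b = false ∧ D.edge w v))
    (hc : D.edge (f n) v → D.edge w v → ∃ d, D.Anc v d ∧ d ∈ S)
    (hn : ¬ (D.edge (f n) v ∧ D.edge w v) → v ∉ S) : Cap D S x b w := by
  have ha : D.Adj v w := he.imp And.right And.right
  subst hv
  by_cases hw : ∀ i, i ≤ n+1 → f i ≠ w
  · right
    refine ⟨n+1, _, h.snoc hw ha hc hn, by simp, ?_⟩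
    simp only [le_refl, if_true]
    rcases he with ⟨h1, h2⟩ | ⟨h1, h2⟩
    · exact Or.inl ⟨h2, Or.inl h1⟩
    · exact Or.inr ⟨h2, Or.inl h1⟩
  · push Not at hw
    obtain ⟨j, hj, rfl⟩ := hw
    rcases Nat.eq_zero_or_pos j with rfl | hj0
    · left; exact h.zero
    obtain ⟨k, rfl⟩ : ∃ k, j = k+1 := ⟨j-1, by omega⟩
    have hkn : k + 1 ≠ n + 1 := by
      intro hh
      rw [hh] at ha
      rcases ha with h' | h' <;> exact edge_ne h' rfl
    right
    refine ⟨k, f, h.trunc hj, rfl, ?_⟩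
    have hcol := h.col k (by omega)
    have hncol := h.ncol k (by omega)
    rcases h.adj k (by omega) with e0 | e0
    · left
      refine ⟨e0, ?_⟩
      rcases he with ⟨h1, h2⟩ | ⟨h1, h2⟩
      · exact Or.inl h1
      · right
        rcases h.adj (k+1) (by omega) with e1 | e1
        · obtain ⟨m, rfl⟩ : ∃ m, n = k+1+m := ⟨n - (k+1), by omega⟩
          have := NP.desc (x := x) (S := S) e1 m (h.trunc (by omega))
          rw [show k+1+1+m = k+1+m+1 by omega] at this
          rcases this with h3 | ⟨h3, h4⟩
          · exact h3
          · obtain ⟨d, hd, hd'⟩ := hc h4 h2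
            exact ⟨d, h3.trans' hd, hd'⟩
        · exact hcol e0 e1
    · right
      exact ⟨e0, Or.inr (hncol fun h' => edge_asymm e0 h'.1)⟩

theorem Rch.cap {D : Dag V} {S : Set V} {x v : V} {b : Bool} (h : Rch D S x b v) :
    Cap D S x b v := by
  induction h with
  | sd e => exact cap_start (Or.inl ⟨rfl, e⟩)
  | su e => exact cap_start (Or.inr ⟨rfl, e⟩)
  | td _ hS e ih =>
    rcases ih with rfl | ⟨n, f, hf, hv, hh⟩
    · exact cap_start (Or.inl ⟨rfl, e⟩)
    · exact cap_step hf hv (Or.inl ⟨rfl, e⟩) (fun _ h2 => absurd h2 (edge_asymm e)) (fun _ => hS)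
  | hd _ hS e ih =>
    rcases ih with rfl | ⟨n, f, hf, hv, hh⟩
    · exact cap_start (Or.inl ⟨rfl, e⟩)
    · exact cap_step hf hv (Or.inl ⟨rfl, e⟩) (fun _ h2 => absurd h2 (edge_asymm e)) (fun _ => hS)
  | tu _ hS e ih =>
    rcases ih with rfl | ⟨n, f, hf, hv, hh⟩
    · exact cap_start (Or.inr ⟨rfl, e⟩)
    · refine cap_step hf hv (Or.inr ⟨rfl, e⟩) (fun h1 _ => ?_) (fun _ => hS)
      rcases hh with ⟨_, h3⟩ | ⟨h3, _⟩
      · simpa using h3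
      · exact absurd h3 (edge_asymm h1)
  | hu _ hS e ih =>
    rcases ih with rfl | ⟨n, f, hf, hv, hh⟩
    · exact cap_start (Or.inr ⟨rfl, e⟩)
    · refine cap_step hf hv (Or.inr ⟨rfl, e⟩) (fun h1 _ => hS) (fun h1 => ?_)
      rcases hh with ⟨h3, _⟩ | ⟨_, h3⟩
      · exact absurd ⟨h3, e⟩ h1
      · simpa using h3

theorem not_dSep_iff (D : Dag V) (S : Set V) {x y : V} (hxy : x ≠ y) :
    ¬ D.dSep x y S ↔ ∃ b, Rch D S x b y := by
  rw [not_dSep_iff_np]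
  constructor
  · rintro ⟨n, f, hf, rfl⟩
    rcases n with _ | n
    · exact absurd hf.zero.symm hxy
    · rcases hf.adj n (by omega) with e | e
      · exact ⟨_, (hf.rch n (by omega)).1 e⟩
      · exact ⟨_, (hf.rch n (by omega)).2 e⟩
  · rintro ⟨b, h⟩
    rcases h.cap with rfl | ⟨n, f, hf, hv, _⟩
    · exact absurd rfl hxy
    · exact ⟨_, f, hf, hv⟩

theorem not_dSep_self (D : Dag V) (S : Set V) (x : V) : ¬ D.dSep x x S := by
  rw [not_dSep_iff_np]
  exact ⟨0, fun _ => x, ⟨rfl, by intros; omega, by intros; omega, by intros; omega,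
    by intros; omega⟩, rfl⟩

theorem mequiv_of_rch {D D' : Dag V}
    (h : ∀ S x y, x ≠ y → ((∃ b, Rch D S x b y) ↔ ∃ b, Rch D' S x b y)) : D.MEquiv D' := by
  intro x y S
  by_cases hxy : x = y
  · subst hxy
    exact iff_of_false (not_dSep_self _ _ _) (not_dSep_self _ _ _)
  · have := h S x y hxy
    rw [← not_dSep_iff _ _ hxy, ← not_dSep_iff _ _ hxy] at this
    exact not_iff_not.mp this

/-- Local Markov property. -/
theorem local_markov (D : Dag V) {x y : V} (hxy : x ≠ y) (hna : ¬ D.Anc x y)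
    (hadj : ¬ D.Adj x y) : D.dSep x y (D.Pa x) := by
  by_contra hc
  rw [not_dSep_iff _ _ hxy] at hc
  obtain ⟨b, hb⟩ := hc
  have key : ∀ b v, Rch D (D.Pa x) x b v →
      (b = true → TransGen D.edge x v) ∧ (b = false → D.edge v x) := by
    intro b v h
    induction h with
    | sd e => exact ⟨fun _ => TransGen.single e, by simp⟩
    | su e => exact ⟨by simp, fun _ => e⟩
    | td _ hS e ih => exact absurd (ih.2 rfl) hS
    | tu _ hS e ih => exact absurd (ih.2 rfl) hS
    | hd _ hS e ih => exact ⟨fun _ => (ih.1 rfl).tail e, by simp⟩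
    | hu _ hS e ih =>
      obtain ⟨d, hd, hd'⟩ := hS
      exact absurd ((ih.1 rfl).to_reflTransGen.trans hd) (D.acyclic _ _ hd')
  cases b
  · exact hadj (Or.inr ((key _ _ hb).2 rfl))
  · exact hna ((key _ _ hb).1 rfl).to_reflTransGen

/-- Directed paths out of `x` are open given subsets of the parents of `x`. -/
theorem not_dSep_of_anc (D : Dag V) {x y : V} (hxy : x ≠ y) (ha : D.Anc x y) {S : Set V}
    (hS : S ⊆ D.Pa x) : ¬ D.dSep x y S := by
  rw [not_dSep_iff _ _ hxy]
  refine ⟨true, ?_⟩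
  have : TransGen D.edge x y := by
    rcases reflTransGen_iff_eq_or_transGen.mp ha with h | h
    · exact absurd h.symm hxy
    · exact h
  clear ha hxy
  induction this with
  | single e => exact Rch.sd e
  | tail h e ih => exact Rch.hd ih (fun h' => D.acyclic _ _ (hS h') h.to_reflTransGen) e

theorem exists_dSep (D : Dag V) {x y : V} (hxy : x ≠ y) (hadj : ¬ D.Adj x y) :
    D.dSep x y (D.Pa x) ∨ D.dSep y x (D.Pa y) := by
  by_cases h : D.Anc x y
  · right
    refine local_markov D hxy.symm (fun h' => ?_) fun h' => hadj h'.symm'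
    rcases ReflTransGen.cases_head h with h1 | ⟨c, h1, h2⟩
    · exact hxy h1
    · exact D.acyclic _ _ h1 (h2.trans h')
  · exact Or.inl (local_markov D hxy h hadj)

theorem not_dSep_of_adj (D : Dag V) {x y : V} (h : D.Adj x y) (S : Set V) : ¬ D.dSep x y S := by
  rcases h with h | h
  · rw [not_dSep_iff _ _ (edge_ne h)]; exact ⟨_, Rch.sd h⟩
  · rw [not_dSep_iff _ _ (edge_ne h).symm]; exact ⟨_, Rch.su h⟩

/-- Same skeleton and v-structures. -/
structure Sim (D D' : Dag V) : Prop where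
  adj : ∀ a b, D.Adj a b ↔ D'.Adj a b
  v : ∀ a b c, a ≠ c → ¬ D.Adj a c → (D.edge a b ∧ D.edge c b ↔ D'.edge a b ∧ D'.edge c b)

theorem MEquiv.symm' {D D' : Dag V} (h : D.MEquiv D') : D'.MEquiv D :=
  fun x y S => (h x y S).symm

theorem MEquiv.adj_imp {D D' : Dag V} (h : D.MEquiv D') {a b : V} (ha : D'.Adj a b) :
    D.Adj a b := by
  by_contra hc
  have hne : a ≠ b := by
    rcases ha with h | h
    · exact edge_ne h
    · exact (edge_ne h).symm
  rcases exists_dSep D hne hc with h1 | h1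
  · exact not_dSep_of_adj D' ha _ ((h _ _ _).1 h1)
  · exact not_dSep_of_adj D' ha.symm' _ ((h _ _ _).1 h1)

theorem MEquiv.v_aux {D D' : Dag V} (h : D.MEquiv D') {a b c : V} (hac : a ≠ c)
    {S : Set V} (hS : D.dSep a c S) (hb : b ∉ S) (h1 : D.edge a b) (h2 : D.edge c b) :
    D'.edge a b ∧ D'.edge c b := by
  by_contra hc
  have hab : D'.Adj a b := h.symm'.adj_imp (Or.inl h1)
  have hcb : D'.Adj c b := h.symm'.adj_imp (Or.inl h2)
  have hS' := (h _ _ _).1 hS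
  refine (not_dSep_iff D' S hac).2 ?_ hS'
  rcases hab with e | e
  · rcases hcb with e' | e'
    · exact absurd ⟨e, e'⟩ hc
    · exact ⟨_, Rch.hd (Rch.sd e) hb e'⟩
  · rcases hcb with e' | e'
    · exact ⟨_, Rch.tu (Rch.su e) hb e'⟩
    · exact ⟨_, Rch.td (Rch.su e) hb e'⟩

theorem MEquiv.v_imp {D D' : Dag V} (h : D.MEquiv D') {a b c : V} (hac : a ≠ c)
    (hn : ¬ D.Adj a c) (h1 : D.edge a b) (h2 : D.edge c b) :
    D'.edge a b ∧ D'.edge c b := by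
  rcases exists_dSep D hac hn with hS | hS
  · exact h.v_aux hac hS (fun h' => edge_asymm h1 h') h1 h2
  · exact (h.v_aux hac.symm hS (fun h' => edge_asymm h2 h') h2 h1).symm

theorem MEquiv.sim {D D' : Dag V} (h : D.MEquiv D') : Sim D D' where
  adj _ _ := ⟨h.symm'.adj_imp, h.adj_imp⟩
  v _ _ _ hac hn := ⟨fun h' => h.v_imp hac hn h'.1 h'.2, fun h' =>
    h.symm'.v_imp hac (fun h'' => hn (h.adj_imp h'')) h'.1 h'.2⟩

end Dag

namespace Dag

/-- `D1` is obtained from `D` by reversing the covered edge `A → B`. -/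
structure Flip (D D1 : Dag V) (A B : V) : Prop where
  e : D.edge A B
  cov : ∀ P, P ≠ A → P ≠ B → (D.edge P B ↔ D.edge P A)
  iff : ∀ a b, D1.edge a b ↔ (D.edge a b ∧ ¬ (a = A ∧ b = B)) ∨ (a = B ∧ b = A)

theorem Flip.symm' {D D1 : Dag V} {A B : V} (h : Flip D D1 A B) : Flip D1 D B A where
  e := (h.iff _ _).2 (Or.inr ⟨rfl, rfl⟩)
  cov P h1 h2 := by
    have := h.cov P h2 h1
    have e1 := h.iff P A
    have e2 := h.iff P B
    tauto
  iff a b := by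
    have := h.iff a b
    have h1 := h.e
    have h2 := edge_asymm h1
    have h3 := edge_ne h1
    by_cases ha : a = A <;> by_cases hb : b = B <;> by_cases ha' : a = B <;> by_cases hb' : b = A
      <;> subst_vars <;> simp_all

theorem Flip.anc {D D1 : Dag V} {A B : V} (h : Flip D D1 A B) {v d : V} (hv : D.Anc v d) :
    D1.Anc v d ∨ (v = A ∧ D1.Anc B d) := by
  induction hv using ReflTransGen.head_induction_on with
  | refl => exact Or.inl ReflTransGen.refl
  | head e _ ih =>
    rename_i v w _
    have hv := h.iff v w
    rcases ih with ih | ⟨rfl, ih⟩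
    · by_cases hc : v = A ∧ w = B
      · right; exact ⟨hc.1, hc.2 ▸ ih⟩
      · left; exact ReflTransGen.head (hv.2 (Or.inl ⟨e, hc⟩)) ih
    · left
      have h1 : v ≠ w := edge_ne e
      have h2 : v ≠ B := by
        rintro rfl
        exact edge_asymm e h.e
      have h3 : D.edge v B := (h.cov v h1 h2).2 e
      exact ReflTransGen.head ((h.iff v B).2 (Or.inl ⟨h3, fun h' => h1 h'.1⟩)) ih

theorem Flip.rch {D D1 : Dag V} {A B : V} (h : Flip D D1 A B) {S : Set V} {x v : V} {b : Bool}
    (hr : Rch D S x b v) (hxv : x ≠ v) : ∃ b', Rch D1 S x b' v := by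
  obtain ⟨T, hT⟩ : ∃ T : V → Prop, ∀ v, T v ↔ (v = x ∨ (Rch D1 S x false v ∧ v ∉ S)) :=
    ⟨_, fun _ => Iff.rfl⟩
  obtain ⟨I, hI⟩ : ∃ I : V → Prop, ∀ v, I v ↔ ∃ d, D1.Anc v d ∧ d ∈ S :=
    ⟨_, fun _ => Iff.rfl⟩
  have Tdn : ∀ v w, T v → D1.edge v w → Rch D1 S x true w := by
    intro v w hv e
    rcases (hT v).1 hv with rfl | ⟨h1, h2⟩
    · exact Rch.sd e
    · exact Rch.td h1 h2 e
  have Tup : ∀ v w, T v → D1.edge w v → Rch D1 S x false w := by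
    intro v w hv e
    rcases (hT v).1 hv with rfl | ⟨h1, h2⟩
    · exact Rch.su e
    · exact Rch.tu h1 h2 e
  have hAB : A ≠ B := edge_ne h.e
  have eBA : D1.edge B A := (h.iff B A).2 (Or.inr ⟨rfl, rfl⟩)
  have keep : ∀ v w, D.edge v w → (v ≠ A ∨ w ≠ B) → D1.edge v w := by
    intro v w e hh
    exact (h.iff v w).2 (Or.inl ⟨e, by tauto⟩)
  have nBA : ¬ D.edge B A := edge_asymm h.e
  have toB : ∀ v, D.edge v A → D1.edge v B := by
    intro v e
    have h1 := edge_ne e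
    have h2 : v ≠ B := by rintro rfl; exact nBA e
    exact keep v B ((h.cov v h1 h2).2 e) (Or.inl h1)
  have toA : ∀ v, D.edge v B → v ≠ A → D1.edge v A := by
    intro v e h1
    have h2 := edge_ne e
    exact keep v A ((h.cov v h1 h2).1 e) (Or.inl h1)
  have anc : ∀ v, (∃ d, D.Anc v d ∧ d ∈ S) → I v ∨ (v = A ∧ I B) := by
    rintro v ⟨d, h1, h2⟩
    rw [hI, hI]
    rcases h.anc h1 with h3 | ⟨h3, h4⟩
    · exact Or.inl ⟨d, h3, h2⟩
    · exact Or.inr ⟨h3, d, h4, h2⟩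
  have hhu : ∀ v w, Rch D1 S x true v → I v → D1.edge w v → Rch D1 S x false w :=
    fun v w h1 h2 h3 => Rch.hu h1 ((hI v).1 h2) h3
  -- the invariant
  obtain ⟨Q, hQ⟩ : ∃ Q : Bool → V → Prop, ∀ b v, Q b v ↔
      ((v ≠ A → v ≠ B → Rch D1 S x b v) ∧
      (b = true → v = A → Rch D1 S x true A ∧ Rch D1 S x true B) ∧
      (b = true → v = B → (Rch D1 S x true A ∧ Rch D1 S x true B) ∨ T A ∨ T B) ∧
      (b = false → v = B → Rch D1 S x false B) ∧
      (b = false → v = A → Rch D1 S x false A ∨ T B ∨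
        (Rch D1 S x true A ∧ Rch D1 S x true B ∧ I B) ∨ A = x)) := ⟨_, fun _ _ => Iff.rfl⟩
  -- exits with full capability
  have Qdn : ∀ v w, T v → D.edge v w → Q true w := by
    intro v w hv e
    have hvw := edge_ne e
    rw [hQ]
    refine ⟨fun h1 h2 => Tdn v w hv (keep v w e (Or.inr h2)), fun _ h1 => ?_, fun _ h1 => ?_,
      by simp, by simp⟩
    · subst h1
      exact ⟨Tdn v w hv (keep v w e (Or.inl hvw)), Tdn v B hv (toB v e)⟩
    · subst h1
      by_cases hvA : v = A
      · subst hvA; exact Or.inr (Or.inl hv)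
      · exact Or.inl ⟨Tdn v A hv (toA v e hvA), Tdn v w hv (keep v w e (Or.inl hvA))⟩
  have Qup : ∀ v w, T v → D.edge w v → Q false w := by
    intro v w hv e
    have hvw := edge_ne e
    rw [hQ]
    refine ⟨fun h1 h2 => Tup v w hv (keep w v e (Or.inl h1)), by simp, by simp, fun _ h1 => ?_,
      fun _ h1 => ?_⟩
    · subst h1
      exact Tup v w hv (keep w v e (Or.inl hAB.symm))
    · subst h1
      by_cases hvB : v = B
      · subst hvB; exact Or.inr (Or.inl hv)
      · exact Or.inl (Tup v w hv (keep w v e (Or.inr hvB)))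
  have hTx : T x := (hT x).2 (Or.inl rfl)
  have AA : ∀ w, Rch D1 S x true A → Rch D1 S x true B → A ∉ S → D.edge A w → Q true w := by
    intro w rA rB hS e
    have hvw := edge_ne e
    rw [hQ]
    refine ⟨fun h1 h2 => Rch.hd rA hS (keep A w e (Or.inr h2)), fun _ h1 => absurd h1.symm hvw,
      fun _ h1 => Or.inl ⟨rA, rB⟩, by simp, by simp⟩
  have upA : ∀ w, D.edge w A → Rch D1 S x false w → Q false w := by
    intro w e hw
    rw [hQ]
    refine ⟨fun _ _ => hw, by simp, by simp, fun _ h1 => ?_, fun _ h1 => ?_⟩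
    · subst h1; exact absurd e nBA
    · exact absurd h1 (edge_ne e)
  have Qtail : ∀ v w, Q false v → v ∉ S → (D.edge v w → Q true w) ∧ (D.edge w v → Q false w) := by
    intro v w q hS
    obtain ⟨q1, q2, q3, q4, q5⟩ := (hQ _ _).1 q
    by_cases hA : v = A
    · subst hA
      rcases q5 rfl rfl with h1 | h1 | ⟨h1, h2, h3⟩ | h1
      · have : T v := (hT v).2 (Or.inr ⟨h1, hS⟩)
        exact ⟨Qdn v w this, Qup v w this⟩
      · constructor
        · intro e
          rw [hQ]
          refine ⟨fun _ h2 => Rch.hd (Tdn B v h1 eBA) hS (keep v w e (Or.inr h2)),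
            fun _ h2 => absurd h2.symm (edge_ne e), fun _ _ => Or.inr (Or.inr h1),
            by simp, by simp⟩
        · intro e
          exact upA w e (Tup B w h1 (toB w e))
      · exact ⟨AA w h1 h2 hS, fun e => upA w e (hhu B w h2 h3 (toB w e))⟩
      · have : T v := (hT v).2 (Or.inl h1)
        exact ⟨Qdn v w this, Qup v w this⟩
    · have : Rch D1 S x false v := by
        by_cases hB : v = B
        · subst hB; exact q4 rfl rfl
        · exact q1 hA hB
      have : T v := (hT v).2 (Or.inr ⟨this, hS⟩)
      exact ⟨Qdn v w this, Qup v w this⟩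
  have Qhd : ∀ v w, Q true v → v ∉ S → D.edge v w → Q true w := by
    intro v w q hS e
    obtain ⟨q1, q2, q3, q4, q5⟩ := (hQ _ _).1 q
    by_cases hA : v = A
    · subst hA
      obtain ⟨h1, h2⟩ := q2 rfl rfl
      exact AA w h1 h2 hS e
    by_cases hB : v = B
    · subst hB
      have hwA : w ≠ A := by rintro rfl; exact nBA e
      have hwB : w ≠ v := (edge_ne e).symm
      have e1 := keep v w e (Or.inl hA)
      rw [hQ]
      refine ⟨fun _ _ => ?_, fun _ h1 => absurd h1 hwA, fun _ h1 => absurd h1 hwB, by simp,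
        by simp⟩
      rcases q3 rfl rfl with ⟨h1, h2⟩ | h1 | h1
      · exact Rch.hd h2 hS e1
      · exact Rch.td (Tup A v h1 eBA) hS e1
      · exact Tdn v w h1 e1
    · have hr := q1 hA hB
      rw [hQ]
      refine ⟨fun h1 h2 => Rch.hd hr hS (keep v w e (Or.inr h2)), fun _ h1 => ?_, fun _ h1 => ?_,
        by simp, by simp⟩
      · subst h1
        exact ⟨Rch.hd hr hS (keep v w e (Or.inl hA)), Rch.hd hr hS (toB v e)⟩
      · subst h1
        exact Or.inl ⟨Rch.hd hr hS (toA v e hA), Rch.hd hr hS (keep v w e (Or.inl hA))⟩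
  have Qhu : ∀ v w, Q true v → (∃ d, D.Anc v d ∧ d ∈ S) → D.edge w v → Q false w := by
    intro v w q hS e
    obtain ⟨q1, q2, q3, q4, q5⟩ := (hQ _ _).1 q
    by_cases hA : v = A
    · subst hA
      obtain ⟨h1, h2⟩ := q2 rfl rfl
      refine upA w e ?_
      rcases anc _ hS with h3 | ⟨_, h3⟩
      · exact hhu v w h1 h3 (keep w v e (Or.inl (edge_ne e)))
      · exact hhu B w h2 h3 (toB w e)
    have hI' : I v := by
      rcases anc _ hS with h3 | ⟨h3, _⟩
      · exact h3
      · exact absurd h3 hA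
    by_cases hB : v = B
    · subst hB
      rcases q3 rfl rfl with ⟨h1, h2⟩ | h1 | h1
      · by_cases hwA : w = A
        · subst hwA
          rw [hQ]
          exact ⟨fun h => absurd rfl h, by simp, by simp, fun _ h => absurd h hAB,
            fun _ _ => Or.inr (Or.inr (Or.inl ⟨h1, h2, hI'⟩))⟩
        · exact upA w ((h.cov w hwA (edge_ne e)).1 e)
            (hhu v w h2 hI' (keep w v e (Or.inl hwA)))
      · by_cases hwA : w = A
        · subst hwA
          rw [hQ]
          refine ⟨fun h => absurd rfl h, by simp, by simp, fun _ h => absurd h hAB,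
            fun _ _ => ?_⟩
          rcases (hT w).1 h1 with h2 | h2
          · exact Or.inr (Or.inr (Or.inr h2))
          · exact Or.inl h2.1
        · exact upA w ((h.cov w hwA (edge_ne e)).1 e) (Tup A w h1 (toA w e hwA))
      · exact Qup v w h1 e
    · have hr := q1 hA hB
      have hw := hhu v w hr hI' (keep w v e (Or.inr hB))
      rw [hQ]
      exact ⟨fun _ _ => hw, by simp, by simp, fun _ h1 => h1 ▸ hw, fun _ h1 => Or.inl (h1 ▸ hw)⟩
  have main : Q b v := by
    clear hxv
    induction hr with
    | sd e => exact Qdn _ _ hTx e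
    | su e => exact Qup _ _ hTx e
    | td _ hS e ih => exact (Qtail _ _ ih hS).1 e
    | tu _ hS e ih => exact (Qtail _ _ ih hS).2 e
    | hd _ hS e ih => exact Qhd _ _ ih hS e
    | hu _ hS e ih => exact Qhu _ _ ih hS e
  obtain ⟨q1, q2, q3, q4, q5⟩ := (hQ _ _).1 main
  by_cases hA : v = A
  · subst hA
    cases b
    · rcases q5 rfl rfl with h1 | h1 | ⟨h1, h2, h3⟩ | h1
      · exact ⟨_, h1⟩
      · exact ⟨_, Tdn B v h1 eBA⟩
      · exact ⟨_, h1⟩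
      · exact absurd h1.symm hxv
    · exact ⟨_, (q2 rfl rfl).1⟩
  by_cases hB : v = B
  · subst hB
    cases b
    · exact ⟨_, q4 rfl rfl⟩
    · rcases q3 rfl rfl with h1 | h1 | h1
      · exact ⟨_, h1.2⟩
      · exact ⟨_, Tup A v h1 eBA⟩
      · rcases (hT v).1 h1 with h2 | h2
        · exact absurd h2.symm hxv
        · exact ⟨_, h2.1⟩
  · exact ⟨_, q1 hA hB⟩

theorem Flip.mequiv {D D1 : Dag V} {A B : V} (h : Flip D D1 A B) : D.MEquiv D1 :=
  mequiv_of_rch fun _ _ _ hxy => ⟨fun ⟨_, hb⟩ => h.rch hb hxy, fun ⟨_, hb⟩ => h.symm'.rch hb hxy⟩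

/-- Reversing a covered edge yields a DAG. -/
theorem exists_flip (D : Dag V) {A B : V} (e : D.edge A B)
    (cov : ∀ P, P ≠ A → P ≠ B → (D.edge P B ↔ D.edge P A)) : ∃ D1, Flip D D1 A B := by
  obtain ⟨E0, hE0⟩ : ∃ E0 : V → V → Prop, ∀ a b, E0 a b ↔ D.edge a b ∧ ¬ (a = A ∧ b = B) :=
    ⟨_, fun _ _ => Iff.rfl⟩
  have sub : ∀ a b, ReflTransGen E0 a b → D.Anc a b := fun a b h =>
    ReflTransGen.mono (fun a b h => ((hE0 a b).1 h).1) _ _ h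
  have hno : ¬ ReflTransGen E0 A B := by
    intro h
    rcases ReflTransGen.cases_tail h with h1 | ⟨P, h1, h2⟩
    · exact edge_ne e h1.symm
    · obtain ⟨h3, h4⟩ := (hE0 _ _).1 h2
      have hPA : P ≠ A := fun h' => h4 ⟨h', rfl⟩
      exact D.acyclic _ _ ((cov P hPA (edge_ne h3)).1 h3) (sub _ _ h1)
  have key : ∀ u v, ReflTransGen (fun a b => E0 a b ∨ (a = B ∧ b = A)) u v →
      ReflTransGen E0 u v ∨ (ReflTransGen E0 u B ∧ ReflTransGen E0 A v) := by
    intro u v h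
    induction h with
    | refl => exact Or.inl ReflTransGen.refl
    | tail _ hs ih =>
      rcases hs with hs | ⟨rfl, rfl⟩
      · exact ih.imp (fun h => h.tail hs) (fun h => ⟨h.1, h.2.tail hs⟩)
      · rcases ih with ih | ih
        · exact Or.inr ⟨ih, ReflTransGen.refl⟩
        · exact absurd ih.2 hno
  refine ⟨⟨fun a b => E0 a b ∨ (a = B ∧ b = A), ?_⟩, e, cov, fun a b => by simp only [hE0]⟩
  intro a b hab hba
  rcases hab with hab | ⟨rfl, rfl⟩
  · rcases key _ _ hba with h | ⟨h1, h2⟩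
    · exact D.acyclic _ _ ((hE0 _ _).1 hab).1 (sub _ _ h)
    · exact hno ((h2.tail hab).trans h1)
  · rcases key _ _ hba with h | ⟨h1, h2⟩
    · exact hno h
    · exact hno h1

theorem Flip.sim {D D1 : Dag V} {A B : V} (h : Flip D D1 A B) : Sim D D1 := h.mequiv.sim

/-- A strictly monotone height function. -/
theorem exists_height [Finite V] (D : Dag V) :
    ∃ h : V → ℕ, (∀ a, 0 < h a) ∧ ∀ a b, D.edge a b → h a < h b := by
  refine ⟨fun a => {u | D.Anc u a}.ncard, fun a => ?_, fun a b e => ?_⟩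
  · exact Set.ncard_pos (Set.toFinite _) |>.2 ⟨a, ReflTransGen.refl⟩
  · apply Set.ncard_lt_ncard _ (Set.toFinite _)
    refine ⟨fun u hu => hu.trans' (anc_of_edge e), fun hh => ?_⟩
    exact D.acyclic _ _ e (hh (show D.Anc b b from ReflTransGen.refl))

theorem height_mono {D : Dag V} {h : V → ℕ} (hh : ∀ a b, D.edge a b → h a < h b) {a b : V}
    (hab : D.Anc a b) : h a ≤ h b := by
  induction hab with
  | refl => exact le_rfl
  | tail _ e ih => exact ih.trans (hh _ _ e).le

theorem Sim.symm' {D D' : Dag V} (h : Sim D D') : Sim D' D where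
  adj a b := (h.adj a b).symm
  v a b c h1 h2 := (h.v a b c h1 fun h3 => h2 ((h.adj _ _).1 h3)).symm

theorem Sim.trans' {D D' D'' : Dag V} (h : Sim D D') (h' : Sim D' D'') : Sim D D'' where
  adj a b := (h.adj a b).trans (h'.adj a b)
  v a b c h1 h2 := (h.v a b c h1 h2).trans (h'.v a b c h1 fun h3 => h2 ((h.adj _ _).2 h3))

theorem Sim.exists_covered [Finite V] {D D' : Dag V} (h : Sim D D')
    (hne : ∃ a b, D.edge a b ∧ D'.edge b a) :
    ∃ A B, D.edge A B ∧ D'.edge B A ∧ ∀ P, P ≠ A → P ≠ B → (D.edge P B ↔ D.edge P A) := by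
  obtain ⟨ht, -, hh⟩ := exists_height D
  obtain ⟨a0, b0, hab0⟩ := hne
  obtain ⟨B, ⟨A0, hA0⟩, hB⟩ := Set.exists_min_image {b | ∃ a, D.edge a b ∧ D'.edge b a} ht
    (Set.toFinite _) ⟨b0, a0, hab0⟩
  obtain ⟨A, ⟨hA1, hA2⟩, hA⟩ := Set.exists_max_image {a | D.edge a B ∧ D'.edge B a} ht
    (Set.toFinite _) ⟨A0, hA0⟩
  refine ⟨A, B, hA1, hA2, fun P hPA hPB => ⟨fun e => ?_, fun e => ?_⟩⟩
  · have hadj : D.Adj P A := by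
      by_contra hc
      have := (h.v P B A hPA hc).1 ⟨e, hA1⟩
      exact edge_asymm hA2 this.2
    rcases hadj with h1 | h1
    · exact h1
    · exfalso
      rcases (h.adj P B).1 (Or.inl e) with h2 | h2
      · rcases (h.adj P A).1 (Or.inr h1) with h3 | h3
        · have := hB P ⟨A, h1, h3⟩
          have := hh _ _ e
          omega
        · exact D'.acyclic _ _ h2 ((anc_of_edge hA2).trans' (anc_of_edge h3))
      · have := hA P ⟨e, h2⟩
        have := hh _ _ h1
        omega
  · have hPA' : D'.edge P A := by
      rcases (h.adj P A).1 (Or.inl e) with h1 | h1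
      · exact h1
      · have := hB A ⟨P, e, h1⟩
        have := hh _ _ hA1
        omega
    have hadj : D.Adj P B := by
      by_contra hc
      exact edge_asymm hA1 ((h.v P A B hPB hc).2 ⟨hPA', hA2⟩).2
    rcases hadj with h1 | h1
    · exact h1
    · exact absurd ((anc_of_edge e).trans' (anc_of_edge hA1)) (D.acyclic _ _ h1)

theorem Sim.mequiv_aux [Finite V] (D' : Dag V) : ∀ n (D : Dag V), Sim D D' →
    {p : V × V | D.edge p.1 p.2 ∧ D'.edge p.2 p.1}.ncard = n → D.MEquiv D' := by
  intro n
  induction n with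
  | zero =>
    intro D h h0
    rw [Set.ncard_eq_zero (Set.toFinite _)] at h0
    have hsub : ∀ a b, D.edge a b → D'.edge a b := by
      intro a b e
      rcases (h.adj a b).1 (Or.inl e) with h1 | h1
      · exact h1
      · have : (a, b) ∈ (∅ : Set (V × V)) := h0 ▸ ⟨e, h1⟩
        exact absurd this (Set.notMem_empty _)
    have heq : D.edge = D'.edge := by
      funext a b
      refine propext ⟨hsub a b, fun e => ?_⟩
      rcases (h.adj a b).2 (Or.inl e) with h1 | h1
      · exact h1
      · exact absurd (hsub _ _ h1) (edge_asymm e)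
    have : D = D' := by
      cases D; cases D'; simp_all
    subst this
    exact fun _ _ _ => Iff.rfl
  | succ n ih =>
    intro D h hn
    have hne : {p : V × V | D.edge p.1 p.2 ∧ D'.edge p.2 p.1}.Nonempty := by
      rw [← Set.ncard_pos (Set.toFinite _)]; omega
    obtain ⟨⟨a, b⟩, hab⟩ := hne
    obtain ⟨A, B, h1, h2, h3⟩ := h.exists_covered ⟨a, b, hab⟩
    obtain ⟨D1, hD1⟩ := exists_flip D h1 h3
    have hset : {p : V × V | D1.edge p.1 p.2 ∧ D'.edge p.2 p.1} =
        {p : V × V | D.edge p.1 p.2 ∧ D'.edge p.2 p.1} \ {(A, B)} := by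
      ext ⟨u, v⟩
      simp only [Set.mem_ofPred_eq, Set.mem_sdiff, Set.mem_singleton_iff, Prod.mk.injEq, hD1.iff]
      constructor
      · rintro ⟨⟨h4, h5⟩ | ⟨rfl, rfl⟩, h6⟩
        · exact ⟨⟨h4, h6⟩, h5⟩
        · exact absurd h6 (edge_asymm h2)
      · rintro ⟨⟨h4, h6⟩, h5⟩
        exact ⟨Or.inl ⟨h4, h5⟩, h6⟩
    have hm := ih D1 (hD1.sim.symm'.trans' h) (by
      rw [hset, Set.ncard_sdiff_singleton_of_mem (show (A, B) ∈ {p : V × V | D.edge p.1 p.2 ∧ D'.edge p.2 p.1} from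
        ⟨h1, h2⟩)]
      omega)
    exact fun x y S => (hD1.mequiv x y S).trans (hm x y S)

theorem Sim.mequiv [Finite V] {D D' : Dag V} (h : Sim D D') : D.MEquiv D' :=
  Sim.mequiv_aux D' _ D h rfl

end Dag

namespace Dag

/-- Closure of the v-structures of `D` under Meek's orientation rules. -/
inductive Mk (D : Dag V) : V → V → Prop
  | v {a b c : V} : D.edge a b → D.edge c b → a ≠ c → ¬ D.Adj a c → Mk D a b
  | r1 {a b c : V} : Mk D c a → D.edge a b → c ≠ b → ¬ D.Adj c b → Mk D a b
  | r2 {a b c : V} : Mk D a c → Mk D c b → D.Adj a b → Mk D a b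
  | r3 {a b c d : V} : D.edge a b → D.Adj a c → D.Adj a d → Mk D c b → Mk D d b → c ≠ d →
      ¬ D.Adj c d → ¬ (D.edge c a ∧ D.edge d a) → Mk D a b

theorem Adj.edge_of_anc {D : Dag V} {a b : V} (h : D.Adj a b) (ha : D.Anc a b) : D.edge a b := by
  rcases h with h | h
  · exact h
  · exact absurd ha (D.acyclic _ _ h)

theorem Mk.sound {D D' : Dag V} (h : Sim D D') {a b : V} (hm : Mk D a b) : D'.edge a b := by
  induction hm with
  | v h1 h2 h3 h4 => exact ((h.v _ _ _ h3 h4).1 ⟨h1, h2⟩).1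
  | r1 _ e h1 h2 ih =>
    rcases (h.adj _ _).1 (Or.inl e) with h3 | h3
    · exact h3
    · exact absurd ((h.v _ _ _ h1 h2).2 ⟨ih, h3⟩).2 (edge_asymm e)
  | r2 _ _ e ih1 ih2 =>
    exact Adj.edge_of_anc ((h.adj _ _).1 e) ((anc_of_edge ih1).trans' (anc_of_edge ih2))
  | r3 e h1 h2 _ _ h3 h4 h5 ih1 ih2 =>
    rcases (h.adj _ _).1 (Or.inl e) with h6 | h6
    · exact h6
    · refine absurd ((h.v _ _ _ h3 h4).2 ⟨?_, ?_⟩) h5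
      · exact Adj.edge_of_anc ((h.adj _ _).1 h1.symm') ((anc_of_edge ih1).trans' (anc_of_edge h6))
      · exact Adj.edge_of_anc ((h.adj _ _).1 h2.symm') ((anc_of_edge ih2).trans' (anc_of_edge h6))

theorem Sim.refl' (D : Dag V) : Sim D D := ⟨fun _ _ => Iff.rfl, fun _ _ _ _ _ => Iff.rfl⟩

theorem Mk.edge' {D : Dag V} {a b : V} (h : Mk D a b) : D.edge a b := h.sound (Sim.refl' D)

structure Un (D : Dag V) (a b : V) : Prop where
  adj : D.Adj a b
  n1 : ¬ Mk D a b
  n2 : ¬ Mk D b a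

theorem Un.symm' {D : Dag V} {a b : V} (h : Un D a b) : Un D b a := ⟨h.adj.symm', h.n2, h.n1⟩

theorem Mk.adj_of_un {D : Dag V} {a b c : V} (h : Mk D a b) (hu : Un D b c) : D.Adj a c := by
  have hac : a ≠ c := by rintro rfl; exact hu.n2 h
  by_contra hc
  rcases hu.adj with e | e
  · exact hu.n1 (Mk.r1 h e hac hc)
  · exact hu.n2 (Mk.v e h.edge' hac.symm fun h' => hc h'.symm')

theorem Mk.absorb {D : Dag V} {a b : V} (h : Mk D a b) : ∀ c, Un D b c → Mk D a c := by
  induction h with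
  | @v a b e h1 h2 h3 h4 =>
    intro c hu
    have ma : Mk D a b := Mk.v h1 h2 h3 h4
    have me : Mk D e b := Mk.v h2 h1 h3.symm fun h' => h4 h'.symm'
    have aa := ma.adj_of_un hu
    have ae := me.adj_of_un hu
    rcases hu.adj with e1 | e1
    · exact Mk.v (aa.edge_of_anc ((anc_of_edge h1).trans' (anc_of_edge e1)))
        (ae.edge_of_anc ((anc_of_edge h2).trans' (anc_of_edge e1))) h3 h4
    · by_contra hc
      refine hu.n2 (Mk.r3 e1 aa.symm' ae.symm' ma me h3 h4 ?_)
      rintro ⟨h5, h6⟩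
      exact hc (Mk.v h5 h6 h3 h4)
  | @r1 a b e h1 h2 h3 h4 ih =>
    intro c hu
    have ma : Mk D a b := Mk.r1 h1 h2 h3 h4
    have aa := ma.adj_of_un hu
    by_contra hc
    have hu' : Un D a c := ⟨aa, hc, fun h' => hu.n2 (Mk.r2 h' ma hu.adj.symm')⟩
    exact h4 ((ih c hu').adj_of_un hu.symm')
  | @r2 a b e h1 h2 h3 ih1 ih2 =>
    intro c hu
    have ma : Mk D a b := Mk.r2 h1 h2 h3
    exact Mk.r2 h1 (ih2 c hu) (ma.adj_of_un hu)
  | @r3 a b e d h1 h2 h3 h4 h5 h6 h7 h8 ih1 ih2 =>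
    intro c hu
    have ma : Mk D a b := Mk.r3 h1 h2 h3 h4 h5 h6 h7 h8
    have me := ih1 c hu
    have md := ih2 c hu
    rcases ma.adj_of_un hu with e1 | e1
    · exact Mk.r3 e1 h2 h3 me md h6 h7 h8
    · exact absurd ⟨h2.symm'.edge_of_anc ((anc_of_edge me.edge').trans' (anc_of_edge e1)),
        h3.symm'.edge_of_anc ((anc_of_edge md.edge').trans' (anc_of_edge e1))⟩ h8

/-- No v-structures: any two parents of a node are adjacent. -/
def VFree (E : Dag V) : Prop := ∀ a b c, E.edge a b → E.edge c b → a = c ∨ E.Adj a c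

theorem VFree.chain {E : Dag V} (hv : VFree E) {h : V → ℕ} (hh : ∀ a b, E.edge a b → h a < h b) :
    ∀ n x, h x = n → ∀ u w, E.Anc u x → E.Anc w x → E.Anc u w ∨ E.Anc w u := by
  intro n
  induction n using Nat.strong_induction_on with
  | _ n ih =>
    intro x hx u w hu hw
    rcases ReflTransGen.cases_tail hu with rfl | ⟨p, hp1, hp2⟩
    · exact Or.inr hw
    rcases ReflTransGen.cases_tail hw with rfl | ⟨q, hq1, hq2⟩
    · exact Or.inl hu
    have lp := hh _ _ hp2
    have lq := hh _ _ hq2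
    rcases hv p x q hp2 hq2 with rfl | e | e
    · exact ih _ (hx ▸ lp) p rfl u w hp1 hq1
    · exact ih _ (hx ▸ lq) q rfl u w (ReflTransGen.tail hp1 e) hq1
    · exact ih _ (hx ▸ lp) p rfl u w hp1 (ReflTransGen.tail hq1 e)

theorem VFree.between {E : Dag V} (hv : VFree E) {h : V → ℕ} (hh : ∀ a b, E.edge a b → h a < h b)
    {q q' : V} (hq : E.Anc q q') : ∀ a, E.edge a q' → h a ≤ h q → a = q ∨ E.edge a q := by
  induction hq with
  | refl => intro a e _; exact Or.inr e
  | @tail p r h1 e ih =>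
    intro a ea hle
    have hqp := height_mono hh h1
    rcases hv a r p ea e with rfl | e1 | e1
    · rcases ReflTransGen.cases_tail h1 with h2 | ⟨c, h2, h3⟩
      · exact Or.inl h2
      · have := height_mono hh h2
        have := hh _ _ h3
        omega
    · exact ih a e1 hle
    · have := hh _ _ e1
      omega

theorem VFree.reroot [Fintype V] {E : Dag V} (hv : VFree E) (x : V) :
    ∃ O : Dag V, (∀ a b, O.Adj a b ↔ E.Adj a b) ∧ VFree O ∧ ∀ a, ¬ O.edge a x := by
  classical
  obtain ⟨h, hpos, hh⟩ := exists_height E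
  obtain ⟨t, ht1, ht2⟩ : ∃ t : V → ℕ,
      (∀ a q, E.Anc q x → (q = a ∨ E.edge a q) → h q ≤ t a) ∧
      (∀ a, t a = 0 ∨ ∃ q, E.Anc q x ∧ (q = a ∨ E.edge a q) ∧ t a = h q) := by
    refine ⟨fun a => (Finset.univ.filter fun q => E.Anc q x ∧ (q = a ∨ E.edge a q)).sup h, ?_, ?_⟩
    · intro a q h1 h2
      exact Finset.le_sup (f := h) (by simp [h1, h2])
    · intro a
      rcases Finset.eq_empty_or_nonempty
        (Finset.univ.filter fun q => E.Anc q x ∧ (q = a ∨ E.edge a q)) with he | hne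
      · left; simp only [he, Finset.sup_empty]; rfl
      · right
        obtain ⟨q, hq, hq'⟩ := Finset.exists_mem_eq_sup _ hne h
        simp only [Finset.mem_filter, Finset.mem_univ, true_and] at hq
        exact ⟨q, hq.1, hq.2, hq'⟩
  have tpos : ∀ a, 0 < t a → E.Anc a x := by
    intro a ha
    rcases ht2 a with h0 | ⟨q, h1, h2, _⟩
    · omega
    · rcases h2 with rfl | h2
      · exact h1
      · exact (anc_of_edge h2).trans' h1
  have tself : ∀ a, E.Anc a x → h a ≤ t a := fun a ha => ht1 a a ha (Or.inl rfl)
  obtain ⟨R, hR⟩ : ∃ R : V → V → Prop, ∀ a b, R a b ↔ (t b < t a ∨ (t a = t b ∧ 0 < t a ∧ h b < h a)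
      ∨ (t a = t b ∧ t a = 0 ∧ h a < h b)) := ⟨_, fun _ _ => Iff.rfl⟩
  have Rtrans : ∀ a b c, R a b → R b c → R a c := by
    intro a b c; simp only [hR]; omega
  have Rirr : ∀ a, ¬ R a a := by
    intro a; simp only [hR]; omega
  let O : Dag V := ⟨fun a b => E.Adj a b ∧ R a b, by
    intro a b hab hba
    have : ∀ c, ReflTransGen (fun a b => E.Adj a b ∧ R a b) b c → R a c := by
      intro c hc
      induction hc with
      | refl => exact hab.2
      | tail _ e ih => exact Rtrans _ _ _ ih e.2
    exact Rirr a (this a hba)⟩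
  have hO : ∀ a b, O.edge a b ↔ E.Adj a b ∧ R a b := fun _ _ => Iff.rfl
  have hadj : ∀ a b, O.Adj a b ↔ E.Adj a b := by
    intro a b
    unfold Adj
    rw [hO, hO]
    constructor
    · rintro (h1 | h1)
      · exact h1.1
      · exact h1.1.symm'
    · intro h1
      have hne : h a ≠ h b := by
        rcases h1 with h1 | h1
        · have := hh _ _ h1; omega
        · have := hh _ _ h1; omega
      have : R a b ∨ R b a := by simp only [hR]; omega
      exact this.imp (fun h2 => ⟨h1, h2⟩) (fun h2 => ⟨Or.symm h1, h2⟩)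
  refine ⟨O, hadj, ?_, ?_⟩
  · intro a b c hab hcb
    rw [hadj]
    rw [hO] at hab hcb
    by_cases hb : E.Anc b x
    · have tb := tself b hb
      have hb0 := hpos b
      rcases ht2 b with h0 | ⟨q, hq1, hq2, hq3⟩
      · omega
      have hbq : h b ≤ h q := by
        rcases hq2 with rfl | hq2
        · exact le_rfl
        · exact (hh _ _ hq2).le
      have key : ∀ a, E.Adj a b → R a b → a = q ∨ E.edge a q := by
        intro a hadj hr
        rw [hR] at hr
        have hta : t b ≤ t a := by omega
        have haA := tpos a (by omega)
        have haq : h a ≤ h q := by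
          by_contra hlt
          have : E.edge b a := by
            rcases hadj with e | e
            · have := hh _ _ e; omega
            · exact e
          have := ht1 b a haA (Or.inr this)
          omega
        rcases ht2 a with h0 | ⟨q', hp1, hp2, hp3⟩
        · omega
        have hqq : E.Anc q q' := by
          rcases hv.chain hh _ x rfl q q' hq1 hp1 with h1 | h1
          · exact h1
          · rcases ReflTransGen.cases_tail h1 with h2 | ⟨c, h2, h3⟩
            · rw [h2]; exact ReflTransGen.refl
            · have := height_mono hh h2
              have := hh _ _ h3
              omega
        rcases hp2 with rfl | hp2
        · rcases ReflTransGen.cases_tail hqq with h2 | ⟨c, h2, h3⟩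
          · exact Or.inl h2
          · have := height_mono hh h2
            have := hh _ _ h3
            omega
        · exact hv.between hh hqq a hp2 haq
      rcases key a hab.1 hab.2 with h1 | h1 <;> rcases key c hcb.1 hcb.2 with h2 | h2
      · exact Or.inl (h1.trans h2.symm)
      · subst h1; exact Or.inr (Or.inr h2)
      · subst h2; exact Or.inr (Or.inl h1)
      · exact hv a q c h1 h2
    · have tb : t b = 0 := by
        by_contra h0
        exact hb (tpos b (by omega))
      have key : ∀ a, E.Adj a b → R a b → E.edge a b := by
        intro a hadj hr
        rcases hadj with e | e
        · exact e
        · have := hh _ _ e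
          rw [hR] at hr
          exact absurd ((anc_of_edge e).trans' (tpos a (by omega))) hb
      exact hv a b c (key a hab.1 hab.2) (key c hcb.1 hcb.2)
  · intro a ha
    rw [hO] at ha
    obtain ⟨ha1, ha2⟩ := ha
    rw [hR] at ha2
    have hx := tself x ReflTransGen.refl
    have hx0 := hpos x
    have haA := tpos a (by omega)
    have := height_mono hh haA
    rcases ht2 a with h0 | ⟨q', hp1, hp2, hp3⟩
    · omega
    · have := height_mono hh hp1
      omega

/-- The DAG `D'` of the class in which `X` has only closure-oriented parents, and in which
every unoriented neighbour chain from `X` descends from `X`. -/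
theorem exists_rooted [Fintype V] (D : Dag V) (X : V) :
    ∃ D' : Dag V, Sim D D' ∧ (∀ a, D'.edge a X → Mk D a X) ∧
      ∀ v, ReflTransGen (Un D) X v → D'.Anc X v := by
  let E : Dag V := ⟨fun a b => D.edge a b ∧ ¬ Mk D a b, fun a b hab hba =>
    D.acyclic a b hab.1 (ReflTransGen.mono (fun _ _ h => h.1) _ _ hba)⟩
  have hE : ∀ a b, E.edge a b ↔ D.edge a b ∧ ¬ Mk D a b := fun _ _ => Iff.rfl
  have hEU : ∀ a b, E.Adj a b ↔ Un D a b := by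
    intro a b
    unfold Adj
    rw [hE, hE]
    constructor
    · rintro (⟨h1, h2⟩ | ⟨h1, h2⟩)
      · exact ⟨Or.inl h1, h2, fun h3 => edge_asymm h1 h3.edge'⟩
      · exact ⟨Or.inr h1, fun h3 => edge_asymm h1 h3.edge', h2⟩
    · intro h
      rcases h.adj with h1 | h1
      · exact Or.inl ⟨h1, h.n1⟩
      · exact Or.inr ⟨h1, h.n2⟩
  have hv : VFree E := by
    intro a b c hab hcb
    by_cases hac : a = c
    · exact Or.inl hac
    right
    have uab : Un D a b := (hEU _ _).1 (Or.inl hab)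
    have ucb : Un D c b := (hEU _ _).1 (Or.inl hcb)
    rw [hEU]
    refine ⟨?_, fun h => uab.n1 (h.absorb b ucb), fun h => ucb.n1 (h.absorb b uab)⟩
    by_contra hc
    exact hab.2 (Mk.v hab.1 hcb.1 hac hc)
  obtain ⟨O, hadj, hOv, hOx⟩ := hv.reroot X
  have hOU : ∀ a b, O.edge a b → Un D a b := fun a b h => (hEU _ _).1 ((hadj _ _).1 (Or.inl h))
  have absorbs : ∀ a b c, TransGen (Mk D) a b → ReflTransGen O.edge b c → TransGen (Mk D) a c := by
    intro a b c h1 h2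
    induction h2 with
    | refl => exact h1
    | tail _ e ih =>
      rcases TransGen.tail'_iff.1 ih with ⟨w, h3, h4⟩
      exact TransGen.tail' h3 (h4.absorb _ (hOU _ _ e))
  have noM : ∀ a, ¬ TransGen (Mk D) a a := by
    intro a h
    obtain ⟨w, h1, h2⟩ := TransGen.tail'_iff.1 h
    exact D.acyclic _ _ h2.edge' (ReflTransGen.mono (fun _ _ h => h.edge') _ _ h1)
  have noO : ∀ a, ¬ TransGen O.edge a a := by
    intro a h
    obtain ⟨w, h1, h2⟩ := TransGen.tail'_iff.1 h
    exact O.acyclic _ _ h2 h1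
  have split : ∀ a b, TransGen (fun a b => Mk D a b ∨ O.edge a b) a b →
      TransGen O.edge a b ∨ ∃ c, ReflTransGen O.edge a c ∧ TransGen (Mk D) c b := by
    intro a b h
    induction h with
    | single e =>
      rcases e with e | e
      · exact Or.inr ⟨a, ReflTransGen.refl, TransGen.single e⟩
      · exact Or.inl (TransGen.single e)
    | tail _ e ih =>
      rcases e with e | e
      · rcases ih with ih | ⟨c, h1, h2⟩
        · exact Or.inr ⟨_, ih.to_reflTransGen, TransGen.single e⟩
        · exact Or.inr ⟨c, h1, h2.tail e⟩
      · rcases ih with ih | ⟨c, h1, h2⟩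
        · exact Or.inl (ih.tail e)
        · exact Or.inr ⟨c, h1, absorbs _ _ _ h2 (ReflTransGen.single e)⟩
  let D' : Dag V := ⟨fun a b => Mk D a b ∨ O.edge a b, by
    intro a b hab hba
    rcases split a a (TransGen.head' hab hba) with h | ⟨c, h1, h2⟩
    · exact noO a h
    · exact noM c (absorbs _ _ _ h2 h1)⟩
  have hD' : ∀ a b, D'.edge a b ↔ Mk D a b ∨ O.edge a b := fun _ _ => Iff.rfl
  have hA : ∀ a b, D.Adj a b ↔ D'.Adj a b := by
    intro a b
    constructor
    · intro h
      by_cases h1 : Mk D a b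
      · exact Or.inl (Or.inl h1)
      by_cases h2 : Mk D b a
      · exact Or.inr (Or.inl h2)
      rcases (hadj a b).2 ((hEU a b).2 ⟨h, h1, h2⟩) with h3 | h3
      · exact Or.inl (Or.inr h3)
      · exact Or.inr (Or.inr h3)
    · rintro ((h | h) | (h | h))
      · exact Or.inl h.edge'
      · exact (hOU _ _ h).adj
      · exact Or.inr h.edge'
      · exact (hOU _ _ h).adj.symm'
  refine ⟨D', ⟨hA, ?_⟩, ?_, ?_⟩
  · intro a b c hac hn
    constructor
    · rintro ⟨h1, h2⟩
      exact ⟨Or.inl (Mk.v h1 h2 hac hn), Or.inl (Mk.v h2 h1 hac.symm fun h' => hn h'.symm')⟩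
    · rintro ⟨h1 | h1, h2 | h2⟩
      · exact ⟨h1.edge', h2.edge'⟩
      · exact absurd (h1.adj_of_un (hOU _ _ h2).symm') hn
      · exact absurd (h2.adj_of_un (hOU _ _ h1).symm').symm' hn
      · rcases hOv a b c h1 h2 with h3 | h3
        · exact absurd h3 hac
        · exact absurd ((hEU _ _).1 ((hadj _ _).1 h3)).adj hn
  · rintro a (h | h)
    · exact h
    · exact absurd h (hOx a)
  · have up : ∀ v, O.Anc X v → ∀ w, O.edge w v → O.Anc X w := by
      intro v h
      induction h with
      | refl => intro w hw; exact absurd hw (hOx w)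
      | @tail u v h1 e ih =>
        intro w hw
        rcases hOv u v w e hw with rfl | h3 | h3
        · exact h1
        · exact ReflTransGen.tail h1 h3
        · exact ih w h3
    intro v h
    have : O.Anc X v := by
      induction h with
      | refl => exact ReflTransGen.refl
      | @tail u v _ e ih =>
        rcases (hadj u v).2 ((hEU u v).2 e) with h3 | h3
        · exact ReflTransGen.tail ih h3
        · exact up u ih v h3
    exact ReflTransGen.mono (fun _ _ h => Or.inr h) _ _ this

theorem exists_directed_path {D' : Dag V} {x y : V} (h : D'.Anc x y) :
    ∃ n, ∃ f : ℕ → V, f 0 = x ∧ f n = y ∧ ∀ i, i < n → D'.edge (f i) (f (i+1)) := by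
  induction h with
  | refl => exact ⟨0, fun _ => x, rfl, rfl, fun i hi => by omega⟩
  | @tail u v _ e ih =>
    obtain ⟨n, f, h0, hn, hf⟩ := ih
    refine ⟨n+1, fun i => if i ≤ n then f i else v, by simpa using h0, by simp, fun i hi => ?_⟩
    by_cases h1 : i + 1 ≤ n
    · simpa only [h1, show i ≤ n by omega, if_true] using hf i (by omega)
    · obtain rfl : i = n := by omega
      simpa [hn] using e

theorem possAn_of_anc {D D' : Dag V} (h : D.MEquiv D') {x y : V} (ha : D'.Anc x y) :
    D.PossAn x y := by
  obtain ⟨n, f, h0, hn, hf⟩ := exists_directed_path ha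
  have anc : ∀ i k, i + k ≤ n → D'.Anc (f i) (f (i+k)) := by
    intro i k
    induction k with
    | zero => intro _; exact ReflTransGen.refl
    | succ k ih => intro hk; exact ReflTransGen.tail (ih (by omega)) (hf (i+k) (by omega))
  have lt : ∀ i j, i < j → j ≤ n → f i ≠ f j := by
    intro i j hij hj heq
    have h2 := anc (i+1) (j-(i+1)) (by omega)
    rw [show i+1+(j-(i+1)) = j by omega, ← heq] at h2
    exact D'.acyclic _ _ (hf i (by omega)) h2
  refine ⟨⟨n, fun i => f i, ?_, h0, hn, fun i => h.adj_imp (Or.inl (hf i i.2))⟩, ?_⟩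
  · intro i j hij
    rcases lt_trichotomy i.1 j.1 with h1 | h1 | h1
    · exact absurd hij (lt _ _ h1 (by omega))
    · exact Fin.ext h1
    · exact absurd hij.symm (lt _ _ h1 (by omega))
  · intro i hc
    exact edge_asymm (hf i i.2) (hc D' h)

theorem anc_of_possAn {D D' : Dag V} {x y : V} (h : Sim D D')
    (hU : ∀ v, ReflTransGen (Un D) x v → D'.Anc x v) (hp : D.PossAn x y) : D'.Anc x y := by
  obtain ⟨p, hp⟩ := hp
  have fin : ∀ v, (ReflTransGen (Un D) x v ∨ ∃ w, D'.Anc x w ∧ Mk D w v) → D'.Anc x v := by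
    rintro v (h1 | ⟨w, h1, h2⟩)
    · exact hU v h1
    · exact ReflTransGen.tail h1 (h2.sound h)
  have key : ∀ i (hi : i < p.n + 1), ReflTransGen (Un D) x (p.f ⟨i, hi⟩) ∨
      ∃ w, D'.Anc x w ∧ Mk D w (p.f ⟨i, hi⟩) := by
    intro i
    induction i with
    | zero => intro hi; left; rw [p.first]
    | succ i ih =>
      intro hi
      have ih := ih (by omega)
      have ha : D.Adj (p.f ⟨i, by omega⟩) (p.f ⟨i+1, hi⟩) := p.adj ⟨i, by omega⟩
      have hn : ¬ D.CpDir (p.f ⟨i+1, hi⟩) (p.f ⟨i, by omega⟩) := hp ⟨i, by omega⟩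
      have hn' : ¬ Mk D (p.f ⟨i+1, hi⟩) (p.f ⟨i, by omega⟩) := fun hm =>
        hn fun D'' h'' => hm.sound h''.sim
      by_cases hm : Mk D (p.f ⟨i, by omega⟩) (p.f ⟨i+1, hi⟩)
      · exact Or.inr ⟨_, fin _ ih, hm⟩
      · have hu : Un D (p.f ⟨i, by omega⟩) (p.f ⟨i+1, hi⟩) := ⟨ha, hm, hn'⟩
        rcases ih with ih | ⟨w, h1, h2⟩
        · exact Or.inl (ih.tail hu)
        · exact Or.inr ⟨w, h1, h2.absorb _ hu⟩
  have := fin _ (key p.n (by omega))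
  rwa [p.last] at this

end Dag

/-- For distinct non-adjacent `X`, `Y`, `X` is a definite non-ancestor of
`Y` in the CPDAG `G` of the MEC of a DAG iff `X` and `Y` are d-separated by `Pa_G(X)` in
every DAG of the MEC represented by `G`. -/
theorem defNonAn_iff_dSep_pa
    {V : Type*} [Fintype V] (D : Dag V) (X Y : V) (hXY : X ≠ Y)
    (hnadj : ¬ D.Adj X Y) :
    ¬ D.PossAn X Y ↔
      ∀ D' : Dag V, D.MEquiv D' → D'.dSep X Y (D.CpPa X) := by
  obtain ⟨D', hs, hpa, hU⟩ := D.exists_rooted X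
  have hm : D.MEquiv D' := hs.mequiv
  constructor
  · intro hn D'' h''
    have heq : D'.Pa X = D.CpPa X := by
      ext a
      exact ⟨fun h1 D3 h3 => (hpa a h1).sound h3.sim, fun h1 => h1 D' hm⟩
    have h1 : D'.dSep X Y (D'.Pa X) :=
      D'.local_markov hXY (fun h => hn (Dag.possAn_of_anc hm h)) fun h => hnadj ((hs.adj _ _).2 h)
    rw [heq] at h1
    exact (h'' _ _ _).1 ((hm _ _ _).2 h1)
  · intro h hp
    have hsub : D.CpPa X ⊆ D'.Pa X := fun a ha => (show D.CpDir a X from ha) D' hm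
    exact D'.not_dSep_of_anc hXY (Dag.anc_of_possAn hs hU hp) hsub (h D' hm)
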